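/- For every integer s ≥ 1 there exists a constant c > 0, depending only on s, such that for every 2π-periodic function f : ℝ → ℂ of class C^{s+1} and every even integer N ≥ 2 (with h = 2π/N), the trapezoid-rule error satisfies |h Σ_{j=−N/2+1}^{N/2} f(α_j) − ∫_{−π}^{π} f(α) dα| ≤ c h^{s+1} ‖f‖_{s+1}. -/

import Mathlib

/-!
The exponentials `exp (i k α)` with `N ∤ k` sum to zero over the grid, so the trapezoid rule sees
only the Fourier coefficients at multiples of `N` (aliasing), and the integral is the one at `0`:
the error is `2π ∑_{n ≠ 0} f̂_{nN}`. Cauchy–Schwarz against the Sobolev weight gives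
`∑_{n ≠ 0} |f̂_{nN}| ≤ (∑_{n ≠ 0} |nN|^{-2r})^{1/2} ‖f‖_r`, and the first factor is a multiple of
`N^{-r}`, hence of `h^r`. It is finite exactly when `r > 1/2`; this is also what makes the Fourier
series of `f` converge absolutely.
-/

open scoped BigOperators
open Finset

noncomputable section

/-- Grid spacing `h = 2π/N`. -/
def hgrid (N : ℤ) : ℝ := 2 * Real.pi / N

/-- Grid points `α_j = j h`. -/
def gridPt (N : ℤ) (j : ℤ) : ℝ := j * hgrid N

/-- Index set `{-N/2+1, …, N/2}`. -/
def idxs (N : ℤ) : Finset ℤ := Finset.Icc (-(N / 2) + 1) (N / 2)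

/-- Discrete Fourier coefficient `f̂_k`. -/
def dft (N : ℤ) (f : ℤ → ℂ) (k : ℤ) : ℂ :=
  (N : ℂ)⁻¹ * ∑ j ∈ idxs N, f j * Complex.exp (-(Complex.I * (k : ℂ) * (gridPt N j : ℂ)))

/-- Reconstruction of a discrete function from Fourier coefficients. -/
def idft (N : ℤ) (c : ℤ → ℂ) (j : ℤ) : ℂ :=
  ∑ k ∈ idxs N, c k * Complex.exp (Complex.I * (k : ℂ) * (gridPt N j : ℂ))

/-- The pseudo-spectral derivative `S_h`. -/
def Sh (N : ℤ) (f : ℤ → ℂ) : ℤ → ℂ :=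
  idft N fun k => if k = N / 2 then 0 else Complex.I * (k : ℂ) * dft N f k

/-- The pseudo-spectral antiderivative `S_h⁻¹`. -/
def Shinv (N : ℤ) (f : ℤ → ℂ) : ℤ → ℂ :=
  idft N fun k => if k = 0 then 0 else dft N f k / (Complex.I * (k : ℂ))

/-- The filtered discrete function `f^p`. -/
def filterP (N : ℤ) (ρ : ℝ → ℝ) (f : ℤ → ℂ) : ℤ → ℂ :=
  idft N fun k => (ρ (gridPt N k) : ℂ) * dft N f k

/-- The filtered derivative `D_h`. -/
def Dh (N : ℤ) (ρ : ℝ → ℝ) (f : ℤ → ℂ) : ℤ → ℂ :=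
  idft N fun k => Complex.I * (k : ℂ) * (ρ (gridPt N k) : ℂ) * dft N f k

/-- Discrete `l²` norm. -/
def l2norm (N : ℤ) (f : ℤ → ℂ) : ℝ :=
  Real.sqrt (hgrid N * ∑ j ∈ idxs N, ‖f j‖ ^ 2)

/-- Discrete Hilbert transform `H_h`. -/
def Hh (N : ℤ) (f : ℤ → ℂ) (i : ℤ) : ℂ :=
  ((hgrid N / Real.pi : ℝ) : ℂ) *
    ∑ j ∈ (idxs N).filter (fun j => Odd (j - i)),
      f j * (Real.cot ((gridPt N i - gridPt N j) / 2) : ℂ)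

/-- Discrete inner product `(f,g)_h`. -/
def dip (N : ℤ) (f g : ℤ → ℂ) : ℂ :=
  (hgrid N : ℂ) * ∑ j ∈ idxs N, (starRingEnd ℂ) (f j) * g j

/-- Discrete mean `⟨f⟩_h`. -/
def dmean (N : ℤ) (f : ℤ → ℂ) : ℂ :=
  (N : ℂ)⁻¹ * ∑ j ∈ idxs N, f j

/-- The discrete function of samples of a periodic function. -/
def samples (N : ℤ) (f : ℝ → ℂ) : ℤ → ℂ := fun j => f (gridPt N j)

/-- Fourier coefficient of a `2π`-periodic function. -/
def fourierCoeffP (f : ℝ → ℂ) (k : ℤ) : ℂ :=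
  ((2 * Real.pi)⁻¹ : ℝ) * ∫ α in (-Real.pi)..Real.pi, f α * Complex.exp (-(Complex.I * (k : ℂ) * (α : ℂ)))

/-- Sobolev norm `‖f‖_s`. -/
def sobolevNorm (s : ℕ) (f : ℝ → ℂ) : ℝ :=
  Real.sqrt (∑' k : ℤ, (1 + (k : ℝ) ^ 2) ^ s * ‖fourierCoeffP f k‖ ^ 2)

/-- A filter (cutoff) function for numerical filtering. -/
structure IsFilter (ρ : ℝ → ℝ) : Prop where
  even : ∀ x, ρ (-x) = ρ x
  nonneg : ∀ x, 0 ≤ ρ x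
  smooth : ∃ r : ℕ, 2 < r ∧ ContDiff ℝ r ρ
  zero_at_pi : ρ Real.pi = 0
  zero_at_neg_pi : ρ (-Real.pi) = 0
  deriv_zero_at_pi : deriv ρ Real.pi = 0
  deriv_zero_at_neg_pi : deriv ρ (-Real.pi) = 0
  one_near_zero : ∃ μ : ℝ, 0 < μ ∧ μ < 1 ∧ ∀ x : ℝ, |x| ≤ μ * Real.pi → ρ x = 1

section

open MeasureTheory
open scoped Real
open Complex (I exp)

theorem summable_and_tsum_le_sqrt_mul_sqrt_of_sq_le_mul {ι : Type*} {a x y : ι → ℝ}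
    (ha : ∀ i, 0 ≤ a i) (hx : ∀ i, 0 ≤ x i) (hy : ∀ i, 0 ≤ y i) (hxs : Summable x)
    (hys : Summable y) (h : ∀ i, a i ^ 2 ≤ x i * y i) :
    Summable a ∧ ∑' i, a i ≤ √(∑' i, x i) * √(∑' i, y i) := by
  have hsum (t : Finset ι) : ∑ i ∈ t, a i ≤ √(∑' i, x i) * √(∑' i, y i) := by
    rw [← Real.sqrt_mul (tsum_nonneg hx)]
    refine Real.le_sqrt_of_sq_le ?_
    calc (∑ i ∈ t, a i) ^ 2 ≤ (∑ i ∈ t, x i) * ∑ i ∈ t, y i :=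
          sum_sq_le_sum_mul_sum_of_sq_le_mul t (fun i _ => hx i) (fun i _ => hy i) fun i _ => h i
      _ ≤ (∑' i, x i) * ∑' i, y i :=
          mul_le_mul (hxs.sum_le_tsum t fun i _ => hx i) (hys.sum_le_tsum t fun i _ => hy i)
            (sum_nonneg fun i _ => hy i) (tsum_nonneg hx)
  exact ⟨summable_of_sum_le ha hsum, Real.tsum_le_of_sum_le ha hsum⟩

theorem one_le_abs_rpow_neg_mul_one_add_sq_rpow {r x : ℝ} (hr : 0 ≤ r) (hx : x ≠ 0) :
    1 ≤ |x| ^ (-(2 * r)) * (1 + x ^ 2) ^ r := by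
  have hpos : 0 < |x| ^ (2 * r) := Real.rpow_pos_of_pos (abs_pos.2 hx) _
  rw [Real.rpow_neg (abs_nonneg x), inv_mul_eq_div, one_le_div hpos, Real.rpow_mul (abs_nonneg x),
    Real.rpow_two, sq_abs]
  gcongr
  linarith

theorem summable_one_add_sq_rpow_neg {r : ℝ} (hr : 1 / 2 < r) :
    Summable fun k : ℤ => (1 + (k : ℝ) ^ 2) ^ (-r) := by
  refine (Real.summable_abs_int_rpow (b := 2 * r) (by linarith)).of_norm_bounded_eventually ?_
  filter_upwards [(Set.finite_singleton (0 : ℤ)).compl_mem_cofinite] with k hk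
  have hpos : (0 : ℝ) < (1 + (k : ℝ) ^ 2) ^ r := by positivity
  rw [Real.norm_of_nonneg (by positivity), Real.rpow_neg (by positivity),
    inv_le_iff_one_le_mul₀ hpos]
  exact one_le_abs_rpow_neg_mul_one_add_sq_rpow (by linarith) (Int.cast_ne_zero.2 hk)

theorem sum_Ico_zpow_of_isPrimitiveRoot {K : Type*} [Field K] {ζ : K} {n : ℕ}
    (hζ : IsPrimitiveRoot ζ n) (k a : ℤ) :
    ∑ j ∈ Finset.Ico a (a + n), (ζ ^ k) ^ j = if (n : ℤ) ∣ k then (n : K) else 0 := by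
  split_ifs with hk
  · simp [(hζ.zpow_eq_one_iff_dvd k).2 hk]
  · rcases n.eq_zero_or_pos with rfl | hn
    · simp
    have hne : ζ ^ k ≠ 0 := zpow_ne_zero k (hζ.ne_zero hn.ne')
    have hne_one : ζ ^ k ≠ 1 := mt (hζ.zpow_eq_one_iff_dvd k).1 hk
    have hpow : (ζ ^ k) ^ n = 1 := by
      rw [← zpow_natCast, ← zpow_mul, hζ.zpow_eq_one_iff_dvd]
      exact dvd_mul_left _ _
    rw [Int.Ico_eq_finset_map, sum_map, add_sub_cancel_left, Int.toNat_natCast]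
    calc ∑ i ∈ range n, (ζ ^ k) ^ (a + i : ℤ)
        = (ζ ^ k) ^ a * ∑ i ∈ range n, (ζ ^ k) ^ i := by
          simp only [zpow_add₀ hne, zpow_natCast, mul_sum]
      _ = 0 := by rw [geom_sum_eq hne_one, hpow, sub_self, zero_div, mul_zero]

theorem fourier_coe_two_pi (n : ℤ) (x : ℝ) :
    fourier n (x : AddCircle (2 * π)) = exp (I * n * x) := by
  rw [fourier_coe_apply]
  congr 1
  push_cast
  field_simp

theorem fourierCoeffP_eq_fourierCoeffOn (f : ℝ → ℂ) (k : ℤ) :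
    fourierCoeffP f k = fourierCoeffOn (neg_lt_self Real.pi_pos) f k := by
  have hT : π - -π = 2 * π := by ring
  rw [fourierCoeffOn_eq_integral, fourierCoeffP, Complex.real_smul, hT, one_div]
  congr 2 with x
  rw [fourier_coe_two_pi, smul_eq_mul, mul_comm]
  simp

theorem fourierCoeff_lift {f : ℝ → ℂ} (hper : Function.Periodic f (2 * π))
    [Fact (0 < 2 * π)] (k : ℤ) : fourierCoeff hper.lift k = fourierCoeffP f k := by
  have hT : -π + 2 * π = π := by ring
  rw [fourierCoeff_eq_intervalIntegral _ _ (-π), hT, fourierCoeffP, Complex.real_smul, one_div]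
  congr 2 with x
  rw [fourier_coe_two_pi, hper.lift_coe, smul_eq_mul, mul_comm]
  simp

theorem integral_eq_two_pi_mul_fourierCoeffP_zero (f : ℝ → ℂ) :
    ∫ α in (-π)..π, f α = 2 * π * fourierCoeffP f 0 := by
  have hpi := Complex.ofReal_ne_zero.2 Real.pi_ne_zero
  simp only [fourierCoeffP, Int.cast_zero, mul_zero, zero_mul, neg_zero, Complex.exp_zero, mul_one]
  push_cast
  field_simp

theorem summable_sq_fourierCoeffP {f : ℝ → ℂ}
    (hf : MemLp f 2 (volume.restrict (Set.Ioc (-π) π))) :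
    Summable fun k => ‖fourierCoeffP f k‖ ^ 2 := by
  simpa only [fourierCoeffP_eq_fourierCoeffOn] using
    (hasSum_sq_fourierCoeffOn (neg_lt_self Real.pi_pos) hf).summable

theorem hasSum_fourierCoeffP_mul_exp {f : ℝ → ℂ} (hper : Function.Periodic f (2 * π))
    (hf : Continuous f) (hsum : Summable (fourierCoeffP f)) (x : ℝ) :
    HasSum (fun k : ℤ => fourierCoeffP f k * exp (I * k * x)) (f x) := by
  have : Fact (0 < 2 * π) := ⟨Real.two_pi_pos⟩
  let F : C(AddCircle (2 * π), ℂ) := ⟨hper.lift, continuous_coinduced_dom.2 hf⟩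
  have hF : fourierCoeff F = fourierCoeffP f := funext (fourierCoeff_lift hper)
  have hx : F (x : AddCircle (2 * π)) = f x := hper.lift_coe x
  simpa only [hF, hx, fourier_coe_two_pi, smul_eq_mul] using
    has_pointwise_sum_fourier_series_of_summable (f := F) (hF ▸ hsum) x

theorem fourierCoeffP_of_hasDerivAt {f f' : ℝ → ℂ} (hend : f (-π) = f π)
    (hf : ∀ x ∈ Set.uIcc (-π) π, HasDerivAt f (f' x) x)
    (hf' : IntervalIntegrable f' volume (-π) π) (k : ℤ) :
    fourierCoeffP f' k = I * k * fourierCoeffP f k := by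
  have hpi := Complex.ofReal_ne_zero.2 Real.pi_ne_zero
  rcases eq_or_ne k 0 with rfl | hk
  · have hint := intervalIntegral.integral_eq_sub_of_hasDerivAt hf hf'
    rw [hend, sub_self, integral_eq_two_pi_mul_fourierCoeffP_zero] at hint
    simpa [hpi] using hint
  · have hk' : (k : ℂ) ≠ 0 := Int.cast_ne_zero.2 hk
    rw [fourierCoeffP_eq_fourierCoeffOn, fourierCoeffP_eq_fourierCoeffOn,
      fourierCoeffOn_of_hasDerivAt _ hk hf hf', hend, sub_self, mul_zero, zero_sub]
    push_cast
    field_simp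
    ring

/-- Membership in the periodic Sobolev space `H^r` of real order `r`: the series defining
`periodicSobolevNorm r f` converges, so that the norm is not the junk value of a divergent sum. -/
def MemPeriodicSobolev (r : ℝ) (f : ℝ → ℂ) : Prop :=
  Summable fun k : ℤ => (1 + (k : ℝ) ^ 2) ^ r * ‖fourierCoeffP f k‖ ^ 2

/-- The Sobolev norm `‖f‖_r` of real order `r`, which is `sobolevNorm` for natural `r`. -/
def periodicSobolevNorm (r : ℝ) (f : ℝ → ℂ) : ℝ :=
  √(∑' k : ℤ, (1 + (k : ℝ) ^ 2) ^ r * ‖fourierCoeffP f k‖ ^ 2)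

theorem periodicSobolevNorm_natCast (m : ℕ) (f : ℝ → ℂ) :
    periodicSobolevNorm m f = sobolevNorm m f := by
  simp only [periodicSobolevNorm, sobolevNorm, Real.rpow_natCast]

theorem MemPeriodicSobolev.add_one {r : ℝ} {f f' : ℝ → ℂ} (hf : MemPeriodicSobolev r f)
    (hf' : MemPeriodicSobolev r f')
    (hcoeff : ∀ k : ℤ, fourierCoeffP f' k = I * k * fourierCoeffP f k) :
    MemPeriodicSobolev (r + 1) f := by
  refine (hf.add hf').congr fun k => ?_
  rw [hcoeff, Real.rpow_add_one (by positivity)]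
  simp only [norm_mul, Complex.norm_I, Complex.norm_intCast, one_mul, mul_pow, sq_abs]
  ring

theorem memPeriodicSobolev_of_contDiff {m : ℕ} {f : ℝ → ℂ}
    (hper : Function.Periodic f (2 * π)) (hf : ContDiff ℝ m f) :
    MemPeriodicSobolev m f := by
  induction m generalizing f with
  | zero =>
    have hL2 : MemLp f 2 (volume.restrict (Set.Ioc (-π) π)) :=
      (memLp_two_iff_integrable_sq_norm hf.continuous.aestronglyMeasurable).2
        (hf.continuous.norm.pow 2).integrableOn_Ioc
    simpa [MemPeriodicSobolev] using summable_sq_fourierCoeffP hL2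
  | succ m ih =>
    have hper' : Function.Periodic (deriv f) (2 * π) := fun x => by
      rw [← deriv_comp_add_const, hper.funext]
    have hend : f (-π) = f π := by simpa [two_mul] using (hper (-π)).symm
    have hdf : Differentiable ℝ f := hf.differentiable (by simp)
    have hf' : ContDiff ℝ m (deriv f) := ContDiff.deriv' (mod_cast hf)
    have hcoeff := fourierCoeffP_of_hasDerivAt hend (fun x _ => (hdf x).hasDerivAt)
      (hf'.continuous.intervalIntegrable _ _)
    rw [Nat.cast_add_one]
    exact (ih hper (hf.of_le (by norm_cast; omega))).add_one (ih hper' hf') hcoeff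

theorem MemPeriodicSobolev.summable_fourierCoeffP {r : ℝ} {f : ℝ → ℂ}
    (hf : MemPeriodicSobolev r f) (hr : 1 / 2 < r) : Summable (fourierCoeffP f) := by
  have hsq (k : ℤ) : ‖fourierCoeffP f k‖ ^ 2 ≤
      (1 + (k : ℝ) ^ 2) ^ (-r) * ((1 + (k : ℝ) ^ 2) ^ r * ‖fourierCoeffP f k‖ ^ 2) := by
    rw [← mul_assoc, ← Real.rpow_add (by positivity), neg_add_cancel, Real.rpow_zero, one_mul]
  exact (summable_and_tsum_le_sqrt_mul_sqrt_of_sq_le_mul (fun k => norm_nonneg _)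
    (fun k => by positivity) (fun k => by positivity) (summable_one_add_sq_rpow_neg hr) hf
    hsq).1.of_norm

theorem idxs_eq_Ico {N : ℤ} (hev : Even N) :
    idxs N = Finset.Ico (-(N / 2) + 1) (-(N / 2) + 1 + N) := by
  ext j
  simp only [idxs, Finset.mem_Icc, Finset.mem_Ico]
  have := Int.two_mul_ediv_two_of_even hev
  omega

theorem hgrid_mul_sum_exp {N : ℤ} (hN : 0 < N) (hev : Even N) (k : ℤ) :
    hgrid N * ∑ j ∈ idxs N, exp (I * k * gridPt N j) = if N ∣ k then 2 * (π : ℂ) else 0 := by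
  rw [idxs_eq_Ico hev]
  lift N to ℕ using hN.le
  have hN0 : N ≠ 0 := by omega
  have hN0' : (N : ℂ) ≠ 0 := Nat.cast_ne_zero.2 hN0
  have hexp (j : ℤ) : exp (I * k * gridPt N j) = (exp (2 * π * I / N) ^ k) ^ j := by
    rw [← Complex.exp_int_mul, ← Complex.exp_int_mul, gridPt, hgrid]
    congr 1
    push_cast
    ring
  simp only [hexp, sum_Ico_zpow_of_isPrimitiveRoot (Complex.isPrimitiveRoot_exp N hN0), hgrid]
  split_ifs
  · push_cast
    field_simp
  · exact mul_zero _

theorem hasSum_trapezoid {f : ℝ → ℂ} (hper : Function.Periodic f (2 * π))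
    (hf : Continuous f) (hsum : Summable (fourierCoeffP f)) {N : ℤ} (hN : 0 < N) (hev : Even N) :
    HasSum (fun n : ℤ => 2 * π * fourierCoeffP f (n * N))
      (hgrid N * ∑ j ∈ idxs N, f (gridPt N j)) := by
  have hinj : Function.Injective fun n : ℤ => n * N := mul_left_injective₀ hN.ne'
  have hmultiples : HasSum (fun k : ℤ => if N ∣ k then 2 * π * fourierCoeffP f k else 0)
      (hgrid N * ∑ j ∈ idxs N, f (gridPt N j)) := by
    refine ((hasSum_sum fun j _ => hasSum_fourierCoeffP_mul_exp hper hf hsum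
      (gridPt N j)).mul_left (hgrid N : ℂ)).congr_fun fun k => ?_
    rw [← mul_sum, mul_left_comm, hgrid_mul_sum_exp hN hev]
    split_ifs <;> ring
  have hrange : ∀ k ∉ Set.range fun n : ℤ => n * N,
      (if N ∣ k then 2 * π * fourierCoeffP f k else 0) = 0 := fun k hk =>
    if_neg fun ⟨n, hn⟩ => hk ⟨n, (hn.trans (mul_comm N n)).symm⟩
  simpa [Function.comp_def] using (hinj.hasSum_iff hrange).2 hmultiples

theorem hasSum_trapezoid_error {f : ℝ → ℂ} (hper : Function.Periodic f (2 * π))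
    (hf : Continuous f) (hsum : Summable (fourierCoeffP f)) {N : ℤ} (hN : 0 < N) (hev : Even N) :
    HasSum (fun n : ℤ => if n = 0 then 0 else 2 * π * fourierCoeffP f (n * N))
      (hgrid N * ∑ j ∈ idxs N, f (gridPt N j) - ∫ α in (-π)..π, f α) := by
  simpa [integral_eq_two_pi_mul_fourierCoeffP_zero] using
    hasSum_ite_sub_hasSum (hasSum_trapezoid hper hf hsum hN hev) 0

/-- The constant `2π (∑_{n ≠ 0} |n|^{-2r})^{1/2}` of the trapezoid error bound in `H^r`; the term
`n = 0` of the series vanishes because `0 ^ x = 0` for `x ≠ 0`. -/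
def aliasingConst (r : ℝ) : ℝ :=
  2 * π * √(∑' n : ℤ, |(n : ℝ)| ^ (-(2 * r)))

theorem aliasingConst_pos {r : ℝ} (hr : 1 / 2 < r) : 0 < aliasingConst r := by
  have hsum := Real.summable_abs_int_rpow (b := 2 * r) (by linarith)
  have := hsum.tsum_pos (fun n => by positivity) 1 (by simp)
  exact mul_pos Real.two_pi_pos (Real.sqrt_pos.2 this)

theorem sq_norm_aliased_fourierCoeffP_le {r : ℝ} (hr : 0 ≤ r) (f : ℝ → ℂ) {N : ℤ}
    (hN : 0 < N) (n : ℤ) :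
    ‖if n = 0 then 0 else 2 * π * fourierCoeffP f (n * N)‖ ^ 2 ≤
      (2 * π * (N : ℝ) ^ (-r)) ^ 2 * |(n : ℝ)| ^ (-(2 * r)) *
        ((1 + ((n * N : ℤ) : ℝ) ^ 2) ^ r * ‖fourierCoeffP f (n * N)‖ ^ 2) := by
  split_ifs with hn
  · simp only [norm_zero, ne_eq, OfNat.ofNat_ne_zero, not_false_eq_true, zero_pow]
    positivity
  have hNR : (0 : ℝ) < N := Int.cast_pos.2 hN
  have hweight := one_le_abs_rpow_neg_mul_one_add_sq_rpow hr
    (Int.cast_ne_zero.2 (mul_ne_zero hn hN.ne') : ((n * N : ℤ) : ℝ) ≠ 0)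
  have hsplit : |((n * N : ℤ) : ℝ)| ^ (-(2 * r)) =
      ((N : ℝ) ^ (-r)) ^ 2 * |(n : ℝ)| ^ (-(2 * r)) := by
    rw [Int.cast_mul, abs_mul, abs_of_pos hNR, Real.mul_rpow (abs_nonneg _) hNR.le,
      ← Real.rpow_mul_natCast hNR.le, mul_comm]
    congr 2
    push_cast
    ring
  rw [hsplit] at hweight
  calc ‖2 * π * fourierCoeffP f (n * N)‖ ^ 2
      = (2 * π) ^ 2 * ‖fourierCoeffP f (n * N)‖ ^ 2 * 1 := by
        simp [mul_pow]
    _ ≤ (2 * π) ^ 2 * ‖fourierCoeffP f (n * N)‖ ^ 2 * (((N : ℝ) ^ (-r)) ^ 2 *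
          |(n : ℝ)| ^ (-(2 * r)) * (1 + ((n * N : ℤ) : ℝ) ^ 2) ^ r) := by
        gcongr
    _ = _ := by ring

theorem norm_trapezoid_error_le {r : ℝ} (hr : 1 / 2 < r) {f : ℝ → ℂ}
    (hper : Function.Periodic f (2 * π)) (hf : Continuous f) (hfr : MemPeriodicSobolev r f)
    {N : ℤ} (hN : 0 < N) (hev : Even N) :
    ‖hgrid N * ∑ j ∈ idxs N, f (gridPt N j) - ∫ α in (-π)..π, f α‖ ≤
      aliasingConst r * (N : ℝ) ^ (-r) * periodicSobolevNorm r f := by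
  have hinj : Function.Injective fun n : ℤ => n * N := mul_left_injective₀ hN.ne'
  have herr := hasSum_trapezoid_error hper hf (hfr.summable_fourierCoeffP hr) hN hev
  have hx := (Real.summable_abs_int_rpow (b := 2 * r) (by linarith)).mul_left
    ((2 * π * (N : ℝ) ^ (-r)) ^ 2)
  have hy : Summable fun n : ℤ =>
      (1 + ((n * N : ℤ) : ℝ) ^ 2) ^ r * ‖fourierCoeffP f (n * N)‖ ^ 2 := hfr.comp_injective hinj
  obtain ⟨hnorm, hcauchy⟩ := summable_and_tsum_le_sqrt_mul_sqrt_of_sq_le_mul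
    (fun n => norm_nonneg _) (fun n => by positivity) (fun n => by positivity) hx hy
    (sq_norm_aliased_fourierCoeffP_le (by linarith) f hN)
  have hsobolev : √(∑' n : ℤ, (1 + ((n * N : ℤ) : ℝ) ^ 2) ^ r * ‖fourierCoeffP f (n * N)‖ ^ 2) ≤
      periodicSobolevNorm r f :=
    Real.sqrt_le_sqrt (tsum_comp_le_tsum_of_inj hfr (fun k => by positivity) hinj)
  have hconst : √(∑' n : ℤ, (2 * π * (N : ℝ) ^ (-r)) ^ 2 * |(n : ℝ)| ^ (-(2 * r))) =
      aliasingConst r * (N : ℝ) ^ (-r) := by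
    rw [tsum_mul_left, Real.sqrt_mul (sq_nonneg _), Real.sqrt_sq (by positivity), aliasingConst]
    ring
  rw [← herr.tsum_eq, ← hconst]
  exact (norm_tsum_le_tsum_norm hnorm).trans (hcauchy.trans (by gcongr))

theorem trapezoid_rule_accuracy_general {r : ℝ} (hr : 1 / 2 < r) :
    ∃ c : ℝ, 0 < c ∧ ∀ f : ℝ → ℂ, Function.Periodic f (2 * π) → Continuous f →
      MemPeriodicSobolev r f → ∀ N : ℤ, 0 < N → Even N →
        ‖hgrid N * ∑ j ∈ idxs N, f (gridPt N j) - ∫ α in (-π)..π, f α‖ ≤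
          c * hgrid N ^ r * periodicSobolevNorm r f := by
  refine ⟨aliasingConst r / (2 * π) ^ r,
    div_pos (aliasingConst_pos hr) (by positivity), fun f hper hf hfr N hN hev => ?_⟩
  have hNR : (0 : ℝ) < N := Int.cast_pos.2 hN
  have hgrid_rpow : (N : ℝ) ^ (-r) = hgrid N ^ r / (2 * π) ^ r := by
    rw [hgrid, Real.div_rpow Real.two_pi_pos.le hNR.le, Real.rpow_neg hNR.le]
    field_simp
  refine (norm_trapezoid_error_le hr hper hf hfr hN hev).trans_eq ?_
  rw [hgrid_rpow]
  ring

end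

/-- Lemma 5.3: spectral accuracy of the trapezoid rule for periodic
functions. -/
theorem trapezoid_rule_accuracy (s : ℕ) (hs : 1 ≤ s) :
    ∃ c : ℝ, 0 < c ∧ ∀ f : ℝ → ℂ, Function.Periodic f (2 * Real.pi) →
      ContDiff ℝ (s + 1 : ℕ) f →
      ∀ N : ℤ, 2 ≤ N → Even N →
        ‖((hgrid N : ℂ) * ∑ j ∈ idxs N, f (gridPt N j) -
            ∫ α in (-Real.pi)..Real.pi, f α)‖ ≤
          c * hgrid N ^ (s + 1) * sobolevNorm (s + 1) f := by
  obtain ⟨c, hc, hbound⟩ := trapezoid_rule_accuracy_general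
    (r := (s + 1 : ℕ)) (by push_cast; linarith [s.cast_nonneg (α := ℝ)])
  refine ⟨c, hc, fun f hper hf N hN hev => ?_⟩
  simpa only [Real.rpow_natCast, periodicSobolevNorm_natCast] using
    hbound f hper hf.continuous (memPeriodicSobolev_of_contDiff hper hf) N (by omega) hev

end
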